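/- arXiv:1707.07303 — 2 statements merged into one kernel-verified Lean document; each statement's English description precedes it below -/
import Mathlib

section
/- Let M be a loopless matroid on the ground set E = {0,1,…,n}. Then the vector ∑_F β(M|F)·β(M/F)·e_F in ℝ^{n+1}, where the sum ranges over all flats F of M with ∅ ≠ F ≠ E, is a scalar multiple of the all-ones vector e_E. (Equivalently, the first Chern-Schwartz-MacPherson cycle csm_1(M) is a balanced fan.) -/
open Matroid Set

/-- The Möbius function of a collection of "flats" (finsets), defined recursively:
`mob flats F G = 0` if `F ⊄ G`, `1` if `F = G`, and `-∑_{F ⊆ G' ⊊ G} mob flats F G'` otherwise,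
the sum being over members `G'` of `flats`. -/
noncomputable def mob {α : Type*} [DecidableEq α] (flats : Finset (Finset α)) :
    Finset α → Finset α → ℤ
  | F, G =>
    if F ⊆ G then
      if F = G then 1
      else - ∑ G' ∈ (flats.filter fun G' => F ⊆ G' ∧ G' ⊂ G).attach,
        mob flats F G'.1
    else 0
termination_by F G => G.card
decreasing_by
  exact Finset.card_lt_card (Finset.mem_filter.mp G'.2).2.2

/-- The rank of a set `X` in a matroid `M`: the largest cardinality of an independent
subset of `X`. -/
noncomputable def rk {α : Type*} (M : Matroid α) (X : Set α) : ℕ :=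
  sSup (Set.ncard '' {I | M.Indep I ∧ I ⊆ X})

/-- An element `e` is a loop of `M` if it belongs to the ground set but to no base. -/
def mLoop {α : Type*} (M : Matroid α) (e : α) : Prop :=
  e ∈ M.E ∧ ∀ B, M.IsBase B → e ∉ B

/-- An element `e` is a coloop of `M` if it belongs to every base. -/
def mColoop {α : Type*} (M : Matroid α) (e : α) : Prop :=
  ∀ B, M.IsBase B → e ∈ B

/-- A matroid is loopless if it has no loops. -/
def mLoopless {α : Type*} (M : Matroid α) : Prop := ∀ e, ¬ mLoop M e

/-- Contraction of a set `C` in a matroid `M`, defined by duality: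
`M / C = (M✶ \ C)✶`, where deletion is restriction to the complement. -/
noncomputable def mContr {α : Type*} (M : Matroid α) (C : Set α) : Matroid α :=
  (M✶ ↾ (M✶.E \ C))✶

/-- The minor `M|G/F` of `M` obtained by restricting to `G` and contracting `F`. -/
noncomputable def mMinor {α : Type*} (M : Matroid α) (G F : Set α) : Matroid α :=
  mContr (M ↾ G) F

open Classical in
/-- The finset of all flats of a matroid on `Fin m`, as finsets. -/
noncomputable def flatsF {m : ℕ} (M : Matroid (Fin m)) : Finset (Finset (Fin m)) :=
  Finset.univ.filter fun F => M.IsFlat ↑F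

open Classical in
/-- The beta invariant `β(M) = (-1)^{r(M)} ∑_{F ∈ L(M)} μ(∅,F) r(F)` of a loopless
matroid `M`; it is `0` if `M` has a loop. -/
noncomputable def betaInv {m : ℕ} (M : Matroid (Fin m)) : ℤ :=
  if mLoopless M then
    (-1) ^ (rk M M.E) * ∑ F ∈ flatsF M, mob (flatsF M) ∅ F * (rk M ↑F : ℤ)
  else 0

/-- The 0/1 indicator vector of a finset `S ⊆ {0,…,m-1}`, as a vector in `ℝ^m`. -/
def eVec {m : ℕ} (S : Finset (Fin m)) : Fin m → ℝ := fun i => if i ∈ S then 1 else 0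

section Mobius

variable {α : Type*} [DecidableEq α] {L : Finset (Finset α)} {F G H : Finset α}

theorem mob_self (L : Finset (Finset α)) (F : Finset α) : mob L F F = 1 := by
  rw [mob]; simp

theorem mob_of_ssubset (h : F ⊂ G) :
    mob L F G = -∑ H ∈ L with F ⊆ H ∧ H ⊂ G, mob L F H := by
  rw [mob, if_pos h.subset, if_neg h.ne, Finset.sum_attach _ (mob L F)]

theorem mob_of_not_subset (h : ¬ F ⊆ G) : mob L F G = 0 := by
  rw [mob, if_neg h]

theorem sum_mob_Icc (hG : G ∈ L) (hFG : F ⊆ G) :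
    ∑ H ∈ L with F ⊆ H ∧ H ⊆ G, mob L F H = if F = G then 1 else 0 := by
  have hins : L.filter (fun H => F ⊆ H ∧ H ⊆ G) =
      insert G (L.filter fun H => F ⊆ H ∧ H ⊂ G) := by
    ext H
    simp only [Finset.mem_filter, Finset.mem_insert, Finset.ssubset_iff_subset_ne]
    constructor
    · rintro ⟨h1, h2, h3⟩
      by_cases h : H = G <;> simp [*]
    · rintro (rfl | ⟨h1, h2, h3, -⟩) <;> simp [*]
  rw [hins, Finset.sum_insert (by simp)]
  split_ifs with h
  · subst h
    rw [mob_self, Finset.sum_eq_zero, add_zero]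
    intro H hH
    simp only [Finset.mem_filter] at hH
    exact absurd hH.2.1 hH.2.2.not_subset
  · rw [mob_of_ssubset (Finset.ssubset_iff_subset_ne.2 ⟨hFG, h⟩)]
    ring

/-- The Möbius function is also a left inverse of the zeta function. -/
theorem sum_mob_Icc_left (hF : F ∈ L) (hG : G ∈ L) :
    ∑ H ∈ L with F ⊆ H ∧ H ⊆ G, mob L H G = if F = G then 1 else 0 := by
  let mu : Matrix L L ℤ := Matrix.of fun F G => mob L F.1 G.1
  let zeta : Matrix L L ℤ := Matrix.of fun F G => if F.1 ⊆ G.1 then 1 else 0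
  have hmul : mu * zeta = 1 := by
    ext ⟨F, hF⟩ ⟨G, hG⟩
    simp only [Matrix.mul_apply, Matrix.one_apply, mu, zeta, Matrix.of_apply, Subtype.mk.injEq]
    rw [Finset.sum_coe_sort L fun H => mob L F H * if H ⊆ G then 1 else 0]
    by_cases hFG : F ⊆ G
    · rw [← sum_mob_Icc hG hFG, Finset.sum_filter]
      refine Finset.sum_congr rfl fun H _ => ?_
      by_cases h1 : F ⊆ H
      · simp [h1]
      · simp [h1, mob_of_not_subset h1]
    · rw [if_neg fun h => hFG h.subset]
      refine Finset.sum_eq_zero fun H _ => ?_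
      by_cases h1 : F ⊆ H
      · rw [if_neg fun h2 => hFG (h1.trans h2), mul_zero]
      · simp [mob_of_not_subset h1]
  have h : (zeta * mu) ⟨F, hF⟩ ⟨G, hG⟩ = (1 : Matrix L L ℤ) ⟨F, hF⟩ ⟨G, hG⟩ := by
    rw [mul_eq_one_comm.1 hmul]
  simp only [Matrix.mul_apply, Matrix.one_apply, mu, zeta, Matrix.of_apply, Subtype.mk.injEq] at h
  rw [Finset.sum_coe_sort L fun H => (if F ⊆ H then 1 else 0) * mob L H G] at h
  rw [← h, Finset.sum_filter]
  refine Finset.sum_congr rfl fun H _ => ?_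
  by_cases h1 : H ⊆ G
  · simp [h1]
  · simp [h1, mob_of_not_subset h1]

theorem mob_filter_subset {A : Finset α} (hG : G ⊆ A) :
    mob (L.filter (· ⊆ A)) F G = mob L F G := by
  induction hn : G.card using Nat.strong_induction_on generalizing G with
  | _ n ih =>
  by_cases hFG : F ⊆ G
  · rcases hFG.eq_or_ssubset with rfl | hlt
    · simp [mob_self]
    · rw [mob_of_ssubset hlt, mob_of_ssubset hlt, Finset.filter_filter]
      congr 1
      refine Finset.sum_congr (Finset.filter_congr fun H _ => ?_) fun H hH => ?_
      · exact ⟨fun h => h.2, fun h => ⟨h.2.subset.trans hG, h⟩⟩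
      · simp only [Finset.mem_filter] at hH
        exact ih _ (hn ▸ Finset.card_lt_card hH.2.2) (hH.2.2.subset.trans hG) rfl
  · simp [mob_of_not_subset hFG]

theorem sum_image_sdiff (L : Finset (Finset α)) (F : Finset α) (g : Finset α → ℤ) :
    ∑ H ∈ (L.filter (F ⊆ ·)).image (· \ F), g H = ∑ H ∈ L with F ⊆ H, g (H \ F) := by
  refine Finset.sum_image fun H hH K hK h => ?_
  simp only [Finset.coe_filter, Set.mem_ofPred_eq] at hH hK
  rw [← Finset.sdiff_union_of_subset hH.2, h, Finset.sdiff_union_of_subset hK.2]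

theorem mob_image_sdiff (hFG : F ⊆ G) :
    mob ((L.filter (F ⊆ ·)).image (· \ F)) ∅ (G \ F) = mob L F G := by
  induction hn : G.card using Nat.strong_induction_on generalizing G with
  | _ n ih =>
  rcases hFG.eq_or_ssubset with rfl | hlt
  · simp [mob_self]
  · have hne : ∅ ⊂ G \ F := by
      rw [Finset.empty_ssubset, Finset.sdiff_nonempty]
      exact hlt.not_subset
    rw [mob_of_ssubset hlt, mob_of_ssubset hne, Finset.sum_filter, sum_image_sdiff,
      ← Finset.sum_filter, Finset.filter_filter]
    congr 1
    have hiff : ∀ H ∈ L, (F ⊆ H ∧ ∅ ⊆ H \ F ∧ H \ F ⊂ G \ F) ↔ (F ⊆ H ∧ H ⊂ G) := by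
      intro H _
      refine and_congr_right fun hFH => ?_
      simp only [Finset.empty_subset, true_and]
      constructor
      · intro h
        rw [← Finset.sdiff_union_of_subset hFH, ← Finset.sdiff_union_of_subset hFG]
        refine Finset.ssubset_iff_subset_ne.2 ⟨Finset.union_subset_union_left h.subset, ?_⟩
        rw [Finset.sdiff_union_of_subset hFH, Finset.sdiff_union_of_subset hFG]
        rintro rfl
        exact h.ne rfl
      · intro h
        refine Finset.ssubset_iff_subset_ne.2 ⟨Finset.sdiff_subset_sdiff h.subset le_rfl, ?_⟩
        intro he
        apply h.ne
        rw [← Finset.sdiff_union_of_subset hFH, he, Finset.sdiff_union_of_subset hFG]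
    refine Finset.sum_congr (Finset.filter_congr hiff) fun H hH => ?_
    simp only [Finset.mem_filter] at hH
    exact ih _ (hn ▸ Finset.card_lt_card hH.2.2) hH.2.1 rfl

/-- Weisner's theorem, integrated against an arbitrary function `g`: here `j H` is the join of
`H` with the atom spanned by `i`. -/
theorem sum_mob_mul_join {i : α} {j : Finset α → Finset α}
    (hj : ∀ H ∈ L, j H ∈ L) (hi : ∀ H ∈ L, i ∈ j H)
    (hle : ∀ H ∈ L, ∀ G ∈ L, i ∈ G → (j H ⊆ G ↔ H ⊆ G)) (g : Finset α → ℤ) :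
    ∑ H ∈ L, mob L ∅ H * g (j H) = 0 := by
  have hw0 : ∀ G, i ∉ G → ∑ H ∈ L with j H = G, mob L ∅ H = 0 := by
    intro G hG
    rw [Finset.filter_false_of_mem, Finset.sum_empty]
    rintro H hH rfl
    exact hG (hi H hH)
  have hw : ∀ G ∈ L, ∑ H ∈ L with j H = G, mob L ∅ H = 0 := by
    intro G hG
    induction hn : G.card using Nat.strong_induction_on generalizing G with
    | _ n ih =>
    by_cases hiG : i ∈ G
    · have hsum := sum_mob_Icc hG (Finset.empty_subset G)
      rw [if_neg (Finset.ne_empty_of_mem hiG).symm] at hsum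
      have hfib : ∑ H ∈ L with ∅ ⊆ H ∧ H ⊆ G, mob L ∅ H =
          ∑ G' ∈ L with G' ⊆ G, ∑ H ∈ L with j H = G', mob L ∅ H := by
        rw [← Finset.sum_fiberwise_of_maps_to (t := L.filter (· ⊆ G)) (g := j)]
        · refine Finset.sum_congr rfl fun G' hG' => ?_
          rw [Finset.filter_filter]
          refine Finset.sum_congr (Finset.filter_congr fun H hH => ?_) fun _ _ => rfl
          simp only [Finset.mem_filter] at hG'
          constructor
          · exact fun h => h.2
          · rintro rfl
            exact ⟨⟨Finset.empty_subset _, (hle H hH G hG hiG).1 hG'.2⟩, rfl⟩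
        · intro H hH
          simp only [Finset.mem_filter] at hH ⊢
          exact ⟨hj H hH.1, (hle H hH.1 G hG hiG).2 hH.2.2⟩
      rw [hfib, Finset.sum_eq_single_of_mem G (by simp [hG])] at hsum
      · exact hsum
      · intro G' hG' hne
        simp only [Finset.mem_filter] at hG'
        exact ih _ (hn ▸ Finset.card_lt_card (Finset.ssubset_iff_subset_ne.2 ⟨hG'.2, hne⟩))
          G' hG'.1 rfl
    · exact hw0 G hiG
  rw [← Finset.sum_fiberwise_of_maps_to hj]
  refine Finset.sum_eq_zero fun G hG => ?_
  rw [← zero_mul (g G), ← hw G hG, Finset.sum_mul]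
  refine Finset.sum_congr rfl fun H hH => ?_
  rw [(Finset.mem_filter.1 hH).2]

/-- `∑_{H ∈ L, H ⊆ F} μ(∅, H) r(H)`: up to sign, the beta invariant of the interval `[∅, F]`. -/
noncomputable def lowerBeta (L : Finset (Finset α)) (r : Finset α → ℤ) (F : Finset α) : ℤ :=
  ∑ H ∈ L with H ⊆ F, mob L ∅ H * r H

/-- `∑_{K ∈ L, F ⊆ K} μ(F, K) (r(K) - r(F))`: up to sign, the beta invariant of the interval
from `F` to the top. -/
noncomputable def upperBeta (L : Finset (Finset α)) (r : Finset α → ℤ) (F : Finset α) : ℤ :=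
  ∑ K ∈ L with F ⊆ K, mob L F K * (r K - r F)

/-- Crapo's formula for the beta invariant with respect to an element `i`. -/
theorem lowerBeta_eq_sum_mem {i : α} {j : Finset α → Finset α} {r : Finset α → ℤ}
    (hj : ∀ H ∈ L, j H ∈ L) (hi : ∀ H ∈ L, i ∈ j H)
    (hle : ∀ H ∈ L, ∀ G ∈ L, i ∈ G → (j H ⊆ G ↔ H ⊆ G))
    (hr : ∀ H ∈ L, r (j H) = if i ∈ H then r H else r H + 1) (hF : F ∈ L) (hiF : i ∈ F) :
    lowerBeta L r F = ∑ H ∈ L with H ⊆ F ∧ i ∈ H, mob L ∅ H := by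
  have h1 := sum_mob_mul_join hj hi hle fun G => if G ⊆ F then r G else 0
  have h2 := sum_mob_Icc hF (Finset.empty_subset F)
  rw [if_neg (Finset.ne_empty_of_mem hiF).symm, Finset.sum_filter] at h2
  rw [lowerBeta, Finset.sum_filter, Finset.sum_filter]
  have key : ∑ H ∈ L, mob L ∅ H * (if j H ⊆ F then r (j H) else 0) =
      ∑ H ∈ L, (if H ⊆ F then mob L ∅ H * r H else 0) +
        ∑ H ∈ L, (if ∅ ⊆ H ∧ H ⊆ F then mob L ∅ H else 0) -
        ∑ H ∈ L, (if H ⊆ F ∧ i ∈ H then mob L ∅ H else 0) := by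
    rw [← Finset.sum_add_distrib, ← Finset.sum_sub_distrib]
    refine Finset.sum_congr rfl fun H hH => ?_
    simp only [hle H hH F hF hiF, hr H hH, Finset.empty_subset, true_and]
    by_cases h3 : H ⊆ F <;> by_cases h4 : i ∈ H <;> simp [h3, h4]
    ring
  linarith

theorem two_mul_sum_mem_mob_mul {i : α} {j : Finset α → Finset α} {r : Finset α → ℤ}
    (hj : ∀ H ∈ L, j H ∈ L) (hi : ∀ H ∈ L, i ∈ j H)
    (hle : ∀ H ∈ L, ∀ G ∈ L, i ∈ G → (j H ⊆ G ↔ H ⊆ G))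
    (hr : ∀ H ∈ L, r (j H) = if i ∈ H then r H else r H + 1) :
    2 * ∑ H ∈ L with i ∈ H, mob L ∅ H * r H =
      ∑ H ∈ L, mob L ∅ H * (r H ^ 2 + r H) := by
  have h1 := sum_mob_mul_join hj hi hle fun G => r G
  have h2 := sum_mob_mul_join hj hi hle fun G => r G * r G
  have key : ∑ H ∈ L, mob L ∅ H * (r (j H) * r (j H)) - ∑ H ∈ L, mob L ∅ H * r (j H) =
      ∑ H ∈ L, mob L ∅ H * (r H ^ 2 + r H) -
        2 * ∑ H ∈ L, (if i ∈ H then mob L ∅ H * r H else 0) := by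
    rw [Finset.mul_sum, ← Finset.sum_sub_distrib, ← Finset.sum_sub_distrib]
    refine Finset.sum_congr rfl fun H hH => ?_
    rw [hr H hH]
    split_ifs <;> ring
  rw [Finset.sum_filter]
  linarith

theorem sum_upperBeta {r : Finset α → ℤ} {T : Finset α} (hT : T ∈ L) (hLT : ∀ H ∈ L, H ⊆ T)
    (hF : F ∈ L) : ∑ G ∈ L with F ⊆ G, upperBeta L r G = r F - r T := by
  have h1 : ∀ G ∈ L, upperBeta L r G =
      ∑ K ∈ L, mob L G K * r K - if G = T then r T else 0 := by
    intro G hG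
    have h := sum_mob_Icc hT (hLT G hG)
    have h2 : ∑ K ∈ L with G ⊆ K, mob L G K = if G = T then 1 else 0 := by
      rw [← h]
      exact Finset.sum_congr
        (Finset.filter_congr fun K hK => by simp [hLT K hK]) fun _ _ => rfl
    simp only [upperBeta, mul_sub, Finset.sum_sub_distrib]
    rw [← Finset.sum_mul, h2, Finset.sum_filter]
    congr 1
    · refine Finset.sum_congr rfl fun K _ => ?_
      split_ifs with hGK
      · rfl
      · simp [mob_of_not_subset hGK]
    · split_ifs with hGT <;> simp [hGT]
  rw [Finset.sum_congr rfl fun G hG => h1 G (Finset.mem_filter.1 hG).1, Finset.sum_sub_distrib]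
  congr 1
  · rw [Finset.sum_comm, Finset.sum_congr rfl fun K hK => (Finset.sum_mul _ _ (r K)).symm,
      Finset.sum_eq_single_of_mem F hF]
    · rw [Finset.sum_eq_single_of_mem F (by simp [hF]), mob_self, one_mul]
      intro G hG hne
      refine mob_of_not_subset fun h => hne (h.antisymm (Finset.mem_filter.1 hG).2)
    · intro K hK hne
      have h := sum_mob_Icc_left hF hK
      rw [if_neg hne.symm, Finset.sum_filter] at h
      refine mul_eq_zero_of_left ?_ _
      rw [Finset.sum_filter]
      refine (Finset.sum_congr rfl fun G _ => ?_).trans h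
      by_cases hGK : G ⊆ K
      · simp [hGK]
      · simp [hGK, mob_of_not_subset hGK]
  · simp [hT, hLT F hF]

/-- The sum of the products of beta invariants over the members of `L` containing `i`, expressed
in terms that do not depend on `i`. -/
theorem two_mul_sum_mem_lowerBeta_mul_upperBeta {i : α} {j : Finset α → Finset α}
    {r : Finset α → ℤ} {T : Finset α} (hT : T ∈ L) (hLT : ∀ H ∈ L, H ⊆ T)
    (hiT : i ∈ T) (hj : ∀ H ∈ L, j H ∈ L) (hi : ∀ H ∈ L, i ∈ j H)
    (hle : ∀ H ∈ L, ∀ G ∈ L, i ∈ G → (j H ⊆ G ↔ H ⊆ G))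
    (hr : ∀ H ∈ L, r (j H) = if i ∈ H then r H else r H + 1) :
    2 * ∑ F ∈ L with i ∈ F, lowerBeta L r F * upperBeta L r F =
      ∑ H ∈ L, mob L ∅ H * (r H ^ 2 + r H) - 2 * (lowerBeta L r T * r T) := by
  rw [← two_mul_sum_mem_mob_mul hj hi hle hr, ← mul_sub]
  congr 1
  rw [lowerBeta_eq_sum_mem hj hi hle hr hT hiT, Finset.sum_mul,
    Finset.filter_congr (p := fun H => H ⊆ T ∧ i ∈ H) (q := fun H => i ∈ H)
      fun H hH => and_iff_right (hLT H hH), ← Finset.sum_sub_distrib]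
  calc ∑ F ∈ L with i ∈ F, lowerBeta L r F * upperBeta L r F
      = ∑ F ∈ L with i ∈ F, ∑ H ∈ L with i ∈ H,
          mob L ∅ H * if H ⊆ F then upperBeta L r F else 0 := by
        refine Finset.sum_congr rfl fun F hF => ?_
        simp only [Finset.mem_filter] at hF
        rw [lowerBeta_eq_sum_mem hj hi hle hr hF.1 hF.2, Finset.sum_mul, Finset.sum_filter,
          Finset.sum_filter]
        refine Finset.sum_congr rfl fun H _ => ?_
        by_cases h1 : i ∈ H <;> by_cases h2 : H ⊆ F <;> simp [h1, h2]
    _ = ∑ H ∈ L with i ∈ H, mob L ∅ H * ∑ F ∈ L with H ⊆ F, upperBeta L r F := by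
        rw [Finset.sum_comm]
        refine Finset.sum_congr rfl fun H hH => ?_
        simp only [Finset.mem_filter] at hH
        rw [← Finset.mul_sum, Finset.sum_filter, Finset.sum_filter]
        congr 1
        refine Finset.sum_congr rfl fun F _ => ?_
        by_cases h2 : H ⊆ F
        · simp [h2, h2 hH.2]
        · simp [h2]
    _ = _ := by
        refine Finset.sum_congr rfl fun H hH => ?_
        rw [sum_upperBeta hT hLT (Finset.mem_filter.1 hH).1, mul_sub]

end Mobius

section Minors

variable {α : Type*} {M : Matroid α}

theorem cast_rk_eq_eRk [Finite α] (M : Matroid α) (X : Set α) : (rk M X : ℕ∞) = M.eRk X := by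
  obtain ⟨I, hI⟩ := M.exists_isBasis' X
  have hrk : rk M X = I.ncard := by
    refine IsGreatest.csSup_eq ⟨⟨I, ⟨hI.indep, hI.subset⟩, rfl⟩, ?_⟩
    rintro _ ⟨J, ⟨hJ, hJX⟩, rfl⟩
    have h := hJ.encard_le_eRk_of_subset hJX
    rw [← hI.encard_eq_eRk, ← J.toFinite.cast_ncard_eq, ← I.toFinite.cast_ncard_eq] at h
    exact_mod_cast h
  rw [hrk, I.toFinite.cast_ncard_eq, hI.encard_eq_eRk]

theorem rk_restrict [Finite α] {R X : Set α} (h : X ⊆ R) : rk (M ↾ R) X = rk M X := by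
  have h' := M.restrict_eRk_eq h
  rw [← cast_rk_eq_eRk, ← cast_rk_eq_eRk] at h'
  exact_mod_cast h'

theorem rk_contract_add [Finite α] {C X : Set α} (hCX : C ⊆ X) (hX : X ⊆ M.E) :
    rk (M ／ C) (X \ C) + rk M C = rk M X := by
  obtain ⟨I, J, hI, hJ, hIJ⟩ := M.exists_isBasis_subset_isBasis hCX
  have hJC : J ∩ C = I := (hI.eq_of_subset_indep (hJ.indep.inter_right C)
    (subset_inter hIJ hI.subset) inter_subset_right).symm
  have hb := hJ.contract_isBasis hI
    (hJ.indep.subset (union_subset sdiff_subset hIJ))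
  have h : M.eRk X = (M ／ C).eRk (X \ C) + M.eRk C := by
    rw [← hJ.encard_eq_eRk, ← hb.encard_eq_eRk, ← hI.encard_eq_eRk, ← hJC,
      encard_sdiff_add_encard_inter]
  simp only [← cast_rk_eq_eRk] at h
  exact_mod_cast h.symm

theorem rk_closure_insert [Finite α] {F : Set α} {e : α} (hF : M.IsFlat F) (he : e ∈ M.E)
    (heF : e ∉ F) : rk M (M.closure (insert e F)) = rk M F + 1 := by
  have h : M.eRk (M.closure (insert e F)) = M.eRk F + 1 := by
    rw [M.eRk_closure_eq, M.eRk_insert_eq_add_one ⟨he, by rwa [hF.closure]⟩]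
  simp only [← cast_rk_eq_eRk] at h
  exact_mod_cast h

theorem mLoopless_iff_loops_eq_empty : mLoopless M ↔ M.loops = ∅ := by
  have h : ∀ e, mLoop M e ↔ e ∈ M.loops := by
    intro e
    rw [← Matroid.isLoop_iff, Matroid.isLoop_iff_forall_mem_compl_isBase, mLoop]
    constructor
    · exact fun h B hB => ⟨h.1, h.2 B hB⟩
    · intro h
      obtain ⟨B, hB⟩ := M.exists_isBase
      exact ⟨(h B hB).1, fun B hB => (h B hB).2⟩
  simp only [mLoopless, h, Set.eq_empty_iff_forall_notMem]

theorem mContr_eq_contract (M : Matroid α) (C : Set α) : mContr M C = M ／ C := rfl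

theorem isFlat_restrict_iff {F G : Set α} (hF : M.IsFlat F) :
    (M ↾ F).IsFlat G ↔ M.IsFlat G ∧ G ⊆ F := by
  have key : ∀ G ⊆ F, (M ↾ F).closure G = M.closure G := by
    intro G hG
    rw [M.restrict_closure_eq hG hF.subset_ground]
    exact inter_eq_left.2 (hF.closure ▸ M.closure_subset_closure hG)
  constructor
  · intro h
    have hGF : G ⊆ F := h.subset_ground
    exact ⟨by rw [isFlat_iff_closure_eq, ← key G hGF, h.closure], hGF⟩
  · rintro ⟨h, hGF⟩
    rw [isFlat_iff_closure_eq, key G hGF, h.closure]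

theorem isFlat_contract_iff {F G : Set α} (hF : F ⊆ M.E) :
    (M ／ F).IsFlat G ↔ M.IsFlat (G ∪ F) ∧ Disjoint G F := by
  simp only [isFlat_iff_closure_eq, contract_closure_eq]
  constructor
  · intro h
    have hd : Disjoint G F := h ▸ disjoint_sdiff_left
    have hsub : F ⊆ M.closure (G ∪ F) := by
      refine (M.subset_closure F).trans (M.closure_subset_closure subset_union_right)
    refine ⟨?_, hd⟩
    conv_rhs => rw [← h]
    rw [sdiff_union_of_subset hsub]
  · rintro ⟨h, hd⟩
    rw [h, union_sdiff_right, hd.sdiff_eq_left]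

end Minors

section Flats

variable {m : ℕ} {M : Matroid (Fin m)} {F : Finset (Fin m)}

theorem mem_flatsF : F ∈ flatsF M ↔ M.IsFlat ↑F := by
  simp [flatsF]

theorem flatsF_restrict (hF : F ∈ flatsF M) :
    flatsF (M ↾ (↑F : Set (Fin m))) = (flatsF M).filter (· ⊆ F) := by
  ext G
  rw [mem_flatsF, isFlat_restrict_iff (mem_flatsF.1 hF), Finset.mem_filter, mem_flatsF,
    Finset.coe_subset]

theorem flatsF_contract (hF : F ∈ flatsF M) :
    flatsF (M ／ (↑F : Set (Fin m))) = ((flatsF M).filter (F ⊆ ·)).image (· \ F) := by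
  ext G
  rw [mem_flatsF, isFlat_contract_iff (mem_flatsF.1 hF).subset_ground, Finset.mem_image]
  constructor
  · rintro ⟨h, hd⟩
    refine ⟨G ∪ F, ?_, ?_⟩
    · simp only [Finset.mem_filter, mem_flatsF, Finset.coe_union]
      exact ⟨h, Finset.subset_union_right⟩
    · rw [Finset.union_sdiff_right, Finset.sdiff_eq_self_of_disjoint]
      exact_mod_cast hd
  · rintro ⟨K, hK, rfl⟩
    simp only [Finset.mem_filter, mem_flatsF] at hK
    rw [← Finset.coe_union, Finset.sdiff_union_of_subset hK.2, Finset.disjoint_coe]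
    exact ⟨hK.1, Finset.sdiff_disjoint⟩

theorem betaInv_restrict (hM : mLoopless M) (hF : F ∈ flatsF M) :
    betaInv (M ↾ (↑F : Set (Fin m))) =
      (-1) ^ rk M ↑F * lowerBeta (flatsF M) (fun G => (rk M ↑G : ℤ)) F := by
  have hl : mLoopless (M ↾ (↑F : Set (Fin m))) := by
    rw [mLoopless_iff_loops_eq_empty] at hM ⊢
    rw [restrict_loops_eq (mem_flatsF.1 hF).subset_ground, hM, empty_inter]
  rw [betaInv, if_pos hl, flatsF_restrict hF, restrict_ground_eq, rk_restrict subset_rfl, lowerBeta]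
  congr 1
  refine Finset.sum_congr rfl fun G hG => ?_
  have hGF := (Finset.mem_filter.1 hG).2
  rw [mob_filter_subset hGF, rk_restrict (Finset.coe_subset.2 hGF)]

theorem betaInv_mContr (hF : F ∈ flatsF M) :
    betaInv (mContr M ↑F) =
      (-1) ^ (rk M M.E + rk M ↑F) * upperBeta (flatsF M) (fun G => (rk M ↑G : ℤ)) F := by
  have hflat := mem_flatsF.1 hF
  have hl : mLoopless (M ／ (↑F : Set (Fin m))) := by
    rw [mLoopless_iff_loops_eq_empty, contract_loops_eq, hflat.closure, sdiff_self]
  rw [mContr_eq_contract, betaInv, if_pos hl, flatsF_contract hF, sum_image_sdiff, upperBeta,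
    contract_ground, ← rk_contract_add hflat.subset_ground subset_rfl, add_assoc, pow_add,
    Even.neg_one_pow ⟨_, rfl⟩, mul_one]
  congr 1
  refine Finset.sum_congr rfl fun K hK => ?_
  simp only [Finset.mem_filter, mem_flatsF] at hK
  rw [mob_image_sdiff hK.2, ← rk_contract_add (Finset.coe_subset.2 hK.2) hK.1.subset_ground,
    Finset.coe_sdiff]
  push_cast
  ring

theorem betaInv_restrict_mul_betaInv_mContr (hM : mLoopless M) (hF : F ∈ flatsF M) :
    betaInv (M ↾ (↑F : Set (Fin m))) * betaInv (mContr M ↑F) =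
      (-1) ^ rk M M.E * (lowerBeta (flatsF M) (fun G => (rk M ↑G : ℤ)) F *
        upperBeta (flatsF M) (fun G => (rk M ↑G : ℤ)) F) := by
  rw [betaInv_restrict hM hF, betaInv_mContr hF, pow_add]
  have h : ((-1 : ℤ) ^ rk M ↑F) * (-1) ^ rk M ↑F = 1 := by
    rw [← pow_add, Even.neg_one_pow ⟨_, rfl⟩]
  linear_combination ((-1 : ℤ) ^ rk M M.E * lowerBeta (flatsF M) (fun G => (rk M ↑G : ℤ)) F *
        upperBeta (flatsF M) (fun G => (rk M ↑G : ℤ)) F) * h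

/-- Twice the `i`-th coordinate of the weighted sum of indicator vectors of flats, in terms that
do not depend on `i`. -/
theorem two_mul_sum_mem_betaInv_mul_betaInv (hE : M.E = Set.univ) (hM : mLoopless M)
    (i : Fin m) :
    2 * ∑ F ∈ flatsF M with i ∈ F,
        betaInv (M ↾ (↑F : Set (Fin m))) * betaInv (mContr M ↑F) =
      (-1) ^ rk M M.E * (∑ H ∈ flatsF M, mob (flatsF M) ∅ H * ((rk M ↑H : ℤ) ^ 2 + rk M ↑H) -
        2 * (lowerBeta (flatsF M) (fun G => (rk M ↑G : ℤ)) Finset.univ *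
          rk M ↑(Finset.univ : Finset (Fin m)))) := by
  let j : Finset (Fin m) → Finset (Fin m) := fun H =>
    (M.closure (insert i ↑H)).toFinite.toFinset
  have hjc : ∀ H, (↑(j H) : Set (Fin m)) = M.closure (insert i ↑H) := by simp [j]
  have hsub : ∀ H : Finset (Fin m), insert i (↑H : Set (Fin m)) ⊆ ↑(j H) := by
    intro H
    rw [hjc]
    exact M.subset_closure _ (by simp [hE])
  have huniv : Finset.univ ∈ flatsF M := by
    rw [mem_flatsF, Finset.coe_univ, ← hE]
    exact M.ground_isFlat
  rw [← two_mul_sum_mem_lowerBeta_mul_upperBeta (i := i) (j := j)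
    (r := fun G => (rk M ↑G : ℤ)) huniv (fun H _ => Finset.subset_univ H) (Finset.mem_univ i),
    Finset.sum_congr rfl fun F hF =>
      betaInv_restrict_mul_betaInv_mContr hM (Finset.mem_filter.1 hF).1, ← Finset.mul_sum]
  · ring
  · intro H _
    rw [mem_flatsF, hjc]
    exact isFlat_closure _
  · exact fun H _ => by exact_mod_cast hsub H (mem_insert i _)
  · intro H _ G hG hiG
    constructor
    · exact fun h x hx => h (by exact_mod_cast hsub H (mem_insert_of_mem i hx))
    · intro h
      rw [← Finset.coe_subset, hjc, ← (mem_flatsF.1 hG).closure]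
      exact M.closure_subset_closure (insert_subset hiG h)
  · intro H hH
    have hflat := mem_flatsF.1 hH
    rw [hjc]
    split_ifs with hiH
    · rw [insert_eq_of_mem (Finset.mem_coe.2 hiH), hflat.closure]
    · rw [rk_closure_insert hflat (by simp [hE]) (by simpa using hiH)]
      push_cast
      rfl

theorem betaInv_mContr_univ (hE : M.E = Set.univ) :
    betaInv (mContr M ↑(Finset.univ : Finset (Fin m))) = 0 := by
  have huniv : Finset.univ ∈ flatsF M := by
    rw [mem_flatsF, Finset.coe_univ, ← hE]
    exact M.ground_isFlat
  rw [betaInv_mContr huniv, upperBeta, Finset.sum_eq_zero, mul_zero]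
  intro K hK
  rw [Finset.univ_subset_iff.1 (Finset.mem_filter.1 hK).2, sub_self, mul_zero]

theorem sum_proper_flats_apply (hE : M.E = Set.univ) (i : Fin m) :
    (∑ F ∈ (flatsF M).filter (fun F => F ≠ ∅ ∧ F ≠ Finset.univ),
        ((betaInv (M ↾ (↑F : Set (Fin m))) * betaInv (mContr M ↑F) : ℤ) : ℝ) • eVec F) i =
      ((∑ F ∈ flatsF M with i ∈ F,
        betaInv (M ↾ (↑F : Set (Fin m))) * betaInv (mContr M ↑F) : ℤ) : ℝ) := by
  rw [Finset.sum_apply, Finset.sum_filter, Finset.sum_filter, Int.cast_sum]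
  refine Finset.sum_congr rfl fun F _ => ?_
  by_cases hiF : i ∈ F
  · by_cases hF : F = Finset.univ
    · subst hF
      rw [betaInv_mContr_univ hE]
      simp
    · simp [hiF, hF, Finset.ne_empty_of_mem hiF, eVec]
  · simp [hiF, eVec]

end Flats

/-- For a loopless matroid `M` on the ground set `{0,…,n}`, the vector
`∑_F β(M|F)·β(M/F)·e_F`, summed over all flats `F` with `∅ ≠ F ≠ E`, is a scalar
multiple of the all-ones vector `e_E`.  (Balancing of the first CSM cycle of `M`.) -/
theorem csm_one_balanced {n : ℕ} (M : Matroid (Fin (n + 1)))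
    (hE : M.E = Set.univ) (hM : mLoopless M) :
    ∃ c : ℝ,
      ∑ F ∈ (flatsF M).filter (fun F => F ≠ ∅ ∧ F ≠ Finset.univ),
        ((betaInv (M ↾ (↑F : Set (Fin (n + 1)))) * betaInv (mContr M ↑F) : ℤ) : ℝ) • eVec F
        = c • eVec (Finset.univ : Finset (Fin (n + 1))) := by
  refine ⟨((∑ F ∈ flatsF M with 0 ∈ F,
    betaInv (M ↾ (↑F : Set (Fin (n + 1)))) * betaInv (mContr M ↑F) : ℤ) : ℝ), ?_⟩
  funext i
  rw [sum_proper_flats_apply hE, Pi.smul_apply, eVec, if_pos (Finset.mem_univ i), smul_eq_mul,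
    mul_one, Int.cast_inj]
  exact mul_left_cancel₀ two_ne_zero ((two_mul_sum_mem_betaInv_mul_betaInv hE hM i).trans
    (two_mul_sum_mem_betaInv_mul_betaInv hE hM 0).symm)
end

section
/- Let M be a matroid on the ground set E = {0,1,…,n} and let v ∈ ℝ^{n+1}. Let ∅ = S_0 ⊊ S_1 ⊊ ⋯ ⊊ S_ℓ ⊊ S_{ℓ+1} = E be the unique chain of subsets of E such that the coordinates of v are constant on each difference S_{j+1}∖S_j and the value of v on S_{j+1}∖S_j is strictly decreasing in j (equivalently, v lies in the relative interior of the cone cone(e_{S_1},…,e_{S_ℓ}) + ℝ·e_E). Then the face of the matroid polytope Q(M) maximizing the dot product with v satisfies face_v(Q(M)) = Q(M|S_1/S_0 ⊕ M|S_2/S_1 ⊕ ⋯ ⊕ M|S_{ℓ+1}/S_ℓ), the matroid polytope of the direct sum of the successive minors. -/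
open Matroid Set

/-- The dot product of two vectors in `ℝ^m`. -/
def dotp {m : ℕ} (v x : Fin m → ℝ) : ℝ := ∑ i, x i * v i

/-- The face of a set `Q ⊆ ℝ^m` maximizing the dot product with `v`. -/
def faceV {m : ℕ} (v : Fin m → ℝ) (Q : Set (Fin m → ℝ)) : Set (Fin m → ℝ) :=
  {x ∈ Q | ∀ y ∈ Q, dotp v y ≤ dotp v x}

/-- The matroid polytope `Q(M)` of a matroid `M` on `{0,…,m-1}`: the convex hull of the
indicator vectors of the bases of `M`. -/
noncomputable def mPoly {m : ℕ} (M : Matroid (Fin m)) : Set (Fin m → ℝ) :=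
  convexHull ℝ {x | ∃ B : Finset (Fin m), M.IsBase ↑B ∧ x = eVec B}

/-- If `I` is a basis of `X`, the bases of `M ／ X` are the sets disjoint from `X` whose union
with `I` is a base of `M`. -/
lemma isBase_contract_iff_of_isBasis {α : Type*} {M : Matroid α} {I X B : Set α}
    (hI : M.IsBasis I X) :
    (M ／ X).IsBase B ↔ M.IsBase (B ∪ I) ∧ Disjoint X B := by
  simp only [isBase_iff_maximal_indep, maximal_subset_iff, hI.contract_indep_iff]
  constructor
  · rintro ⟨⟨hBI, hdj⟩, hmax⟩
    refine ⟨⟨hBI, fun J hJ hJss => ?_⟩, hdj⟩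
    obtain ⟨hBJ, hIJ⟩ := union_subset_iff.1 hJss
    have hJX : I = J ∩ X := hI.eq_of_subset_indep (hJ.inter_right X)
      (subset_inter hIJ hI.subset) inter_subset_right
    have hJd : B = J \ X := hmax
      ⟨hJ.subset (union_subset sdiff_subset hIJ), disjoint_sdiff_right⟩
      (subset_sdiff.2 ⟨hBJ, hdj.symm⟩)
    rw [hJd, hJX, sdiff_union_inter]
  · rintro ⟨⟨hBI, hmax⟩, hdj⟩
    refine ⟨⟨hBI, hdj⟩, fun J ⟨hJ, hJX⟩ hBJ => ?_⟩
    have h := hmax hJ (union_subset_union_left I hBJ)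
    refine hBJ.antisymm fun e he => ?_
    have heI : e ∉ I := fun h => hJX.le_bot ⟨hI.subset h, he⟩
    exact (h.symm.subset (Or.inl he)).resolve_right heI

lemma isBase_mMinor_iff {α : Type*} {M : Matroid α} {F G I B : Set α} (hFG : F ⊆ G)
    (hG : G ⊆ M.E) (hI : M.IsBasis I F) :
    (mMinor M G F).IsBase B ↔ M.IsBasis (B ∪ I) G ∧ Disjoint F B := by
  change ((M ↾ G) ／ F).IsBase B ↔ _
  rw [isBase_contract_iff_of_isBasis (hI.isBasis_restrict_of_subset hFG), isBase_restrict_iff hG]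

lemma exists_mem_succ_sdiff_castSucc {α : Type*} [DecidableEq α] {k : ℕ}
    {S : Fin (k + 1) → Finset α} (h0 : S 0 = ∅) {i : α} {t : Fin (k + 1)} (hi : i ∈ S t) :
    ∃ j : Fin k, i ∈ S j.succ \ S j.castSucc := by
  by_contra! h
  have key : ∀ t, i ∉ S t := by
    intro t
    induction t using Fin.induction with
    | zero => simp [h0]
    | succ j ih => exact fun hj => h j (Finset.mem_sdiff.2 ⟨hj, ih⟩)
  exact key t hi

/-- A union of bases of the successive minors along a chain meets each member of the chain
in a basis. -/
lemma isBasis_biUnion_inter {α : Type*} [DecidableEq α] {k : ℕ} {M : Matroid α}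
    {S : Fin (k + 1) → Finset α} (hS : Monotone S) (h0 : S 0 = ∅) (hE : ∀ t, ↑(S t) ⊆ M.E)
    {B : Fin k → Finset α}
    (hB : ∀ j, (mMinor M ↑(S j.succ) ↑(S j.castSucc)).IsBase ↑(B j)) (t : Fin (k + 1)) :
    M.IsBasis ↑(Finset.univ.biUnion B ∩ S t) ↑(S t) := by
  have hsub : ∀ j, ∀ i ∈ B j, i ∈ S j.succ ∧ i ∉ S j.castSucc := fun j i hi =>
    (hB j).subset_ground (Finset.mem_coe.2 hi)
  induction t using Fin.induction with
  | zero => simp [h0]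
  | succ j ih =>
    have h := ((isBase_mMinor_iff (Finset.coe_subset.2 (hS (Fin.castSucc_le_succ j)))
      (hE _) ih).1 (hB j)).1
    convert h using 1
    rw [← Finset.coe_union, Finset.coe_inj]
    ext i
    simp only [Finset.mem_inter, Finset.mem_biUnion, Finset.mem_univ, true_and, Finset.mem_union]
    constructor
    · rintro ⟨⟨s, his⟩, hij⟩
      rcases lt_trichotomy s j with hlt | rfl | hgt
      · exact Or.inr ⟨⟨s, his⟩, hS (Fin.succ_le_castSucc_iff.2 hlt) (hsub s i his).1⟩
      · exact Or.inl his
      · exact absurd (hS (Fin.succ_le_castSucc_iff.2 hgt) hij) (hsub s i his).2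
    · rintro (hij | ⟨hU, hij⟩)
      · exact ⟨⟨j, hij⟩, (hsub j i hij).1⟩
      · exact ⟨hU, hS (Fin.castSucc_le_succ j) hij⟩

/-- A finset meeting each member of an exhaustive chain in a basis is a union of bases of the
successive minors. -/
lemma exists_isBase_mMinor_biUnion_eq {α : Type*} [DecidableEq α] {k : ℕ} {M : Matroid α}
    {S : Fin (k + 1) → Finset α} (hS : Monotone S) (h0 : S 0 = ∅) (hE : ∀ t, ↑(S t) ⊆ M.E)
    {U : Finset α} (hU : U ⊆ S (Fin.last k)) (hUS : ∀ t, M.IsBasis ↑(U ∩ S t) ↑(S t)) :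
    ∃ B : Fin k → Finset α,
      (∀ j, (mMinor M ↑(S j.succ) ↑(S j.castSucc)).IsBase ↑(B j)) ∧
      U = Finset.univ.biUnion B := by
  refine ⟨fun j => U ∩ (S j.succ \ S j.castSucc), fun j => ?_, ?_⟩
  · have hj := hS (Fin.castSucc_le_succ j)
    rw [isBase_mMinor_iff (Finset.coe_subset.2 hj) (hE _) (hUS _), ← Finset.coe_union,
      ← Finset.inter_union_distrib_left, Finset.sdiff_union_of_subset hj]
    refine ⟨hUS _, Finset.disjoint_coe.2 ?_⟩
    exact Finset.disjoint_sdiff.mono_right Finset.inter_subset_right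
  · ext i
    simp only [Finset.mem_biUnion, Finset.mem_univ, true_and, Finset.mem_inter]
    constructor
    · intro hi
      obtain ⟨j, hj⟩ := exists_mem_succ_sdiff_castSucc h0 (hU hi)
      exact ⟨j, hi, hj⟩
    · rintro ⟨j, hi, -⟩
      exact hi

lemma dotp_eVec {m : ℕ} (v : Fin m → ℝ) (B : Finset (Fin m)) :
    dotp v (eVec B) = ∑ i ∈ B, v i := by
  simp [dotp, eVec]

lemma isLinearMap_dotp {m : ℕ} (v : Fin m → ℝ) : IsLinearMap ℝ (dotp v) where
  map_add x y := by simp [dotp, add_mul, Finset.sum_add_distrib]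
  map_smul a x := by simp [dotp, Finset.mul_sum, mul_assoc]

/-- The face of a convex hull in direction `v` is the convex hull of the generators
maximizing `dotp v`. -/
lemma faceV_convexHull {m : ℕ} (v : Fin m → ℝ) {V : Set (Fin m → ℝ)} {x₀ : Fin m → ℝ}
    (hx₀ : x₀ ∈ V) (hmax : ∀ y ∈ V, dotp v y ≤ dotp v x₀) :
    faceV v (convexHull ℝ V) = convexHull ℝ {x ∈ V | dotp v x = dotp v x₀} := by
  have hlin := isLinearMap_dotp v
  have hle : ∀ y ∈ convexHull ℝ V, dotp v y ≤ dotp v x₀ := fun y hy =>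
    convexHull_min (t := {y | dotp v y ≤ dotp v x₀}) hmax (convex_halfSpace_le hlin _) hy
  apply Subset.antisymm
  · rintro x ⟨hx, hxmax⟩
    have hconv : Convex ℝ {x | dotp v x ≤ dotp v x₀ ∧
        (dotp v x = dotp v x₀ → x ∈ convexHull ℝ {x ∈ V | dotp v x = dotp v x₀})} := by
      rintro x ⟨hx, hx'⟩ y ⟨hy, hy'⟩ a b ha hb hab
      have hdot : dotp v (a • x + b • y) = a * dotp v x + b * dotp v y := by
        rw [hlin.map_add, hlin.map_smul, hlin.map_smul, smul_eq_mul, smul_eq_mul]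
      refine ⟨convex_halfSpace_le hlin _ hx hy ha hb hab, fun h => ?_⟩
      rcases ha.eq_or_lt with rfl | ha
      · obtain rfl : b = 1 := by linarith
        simp only [zero_smul, one_smul, zero_add] at h ⊢
        exact hy' h
      rcases hb.eq_or_lt with rfl | hb
      · obtain rfl : a = 1 := by linarith
        simp only [zero_smul, one_smul, add_zero] at h ⊢
        exact hx' h
      rw [hdot] at h
      obtain rfl : b = 1 - a := by linarith
      exact convex_convexHull ℝ _ (hx' (hx.antisymm (by nlinarith)))
        (hy' (hy.antisymm (by nlinarith))) ha.le hb.le hab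
    refine (convexHull_min (fun y hy => ?_) hconv hx).2
      ((hle x hx).antisymm (hxmax x₀ (subset_convexHull ℝ V hx₀)))
    exact ⟨hmax y hy, fun h => subset_convexHull ℝ _ ⟨hy, h⟩⟩
  · intro x hx
    refine ⟨convexHull_mono (sep_subset V _) hx, fun y hy => ?_⟩
    have hxeq : dotp v x = dotp v x₀ :=
      convexHull_min (t := {y | dotp v y = dotp v x₀}) (fun y hy => hy.2)
        (convex_hyperplane hlin _) hx
    exact (hle y hy).trans_eq hxeq.symm

/-- Summation by parts along a chain. -/
lemma sum_inter_chain {α : Type*} [DecidableEq α] {k : ℕ} {S : Fin (k + 1) → Finset α}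
    (hS : Monotone S) (h0 : S 0 = ∅) {v : α → ℝ} {c : Fin k → ℝ}
    (hv : ∀ j : Fin k, ∀ i ∈ S j.succ \ S j.castSucc, v i = c j) (B : Finset α) :
    ∑ i ∈ B ∩ S (Fin.last k), v i =
      ∑ j, c j * (((B ∩ S j.succ).card : ℝ) - (B ∩ S j.castSucc).card) := by
  have hstep : ∀ j : Fin k,
      c j * (((B ∩ S j.succ).card : ℝ) - (B ∩ S j.castSucc).card) =
        ∑ i ∈ B ∩ S j.succ, v i - ∑ i ∈ B ∩ S j.castSucc, v i := by
    intro j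
    have hsub : B ∩ S j.castSucc ⊆ B ∩ S j.succ :=
      Finset.inter_subset_inter_left (hS (Fin.castSucc_le_succ j))
    rw [← Finset.sum_sdiff_eq_sub hsub, ← Nat.cast_sub (Finset.card_le_card hsub),
      ← Finset.card_sdiff_of_subset hsub]
    rw [Finset.sum_congr rfl (g := fun _ => c j), Finset.sum_const, nsmul_eq_mul, mul_comm]
    intro i hi
    apply hv
    simp only [Finset.mem_sdiff, Finset.mem_inter] at hi ⊢
    tauto
  rw [Finset.sum_congr rfl fun j _ => hstep j]
  have htel : ∀ (l : ℕ) (g : Fin (l + 1) → ℝ),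
      ∑ j : Fin l, (g j.succ - g j.castSucc) = g (Fin.last l) - g 0 := by
    intro l g
    rw [Finset.sum_sub_distrib, sub_eq_sub_iff_add_eq_add, add_comm, ← Fin.sum_univ_succ,
      Fin.sum_univ_castSucc, add_comm]
  rw [htel k fun t => ∑ i ∈ B ∩ S t, v i]
  simp [h0]

/-- Pairing the increments of a nonnegative sequence starting at `0` with strictly decreasing
weights. -/
lemma mul_last_le_sum_mul_sub {k : ℕ} {c : Fin (k + 1) → ℝ} (hc : StrictAnti c)
    {d : Fin (k + 2) → ℝ} (hd : ∀ t, 0 ≤ d t) (h0 : d 0 = 0) :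
    c (Fin.last k) * d (Fin.last (k + 1)) ≤ ∑ j, c j * (d j.succ - d j.castSucc) ∧
      (∑ j, c j * (d j.succ - d j.castSucc) = c (Fin.last k) * d (Fin.last (k + 1)) →
        ∀ j : Fin (k + 1), d j.castSucc = 0) := by
  induction k with
  | zero =>
    have h0' : d (Fin.castSucc 0) = 0 := h0
    constructor
    · simp [h0]
    · intro _ j
      rwa [Fin.fin_one_eq_zero j]
  | succ k ih =>
    obtain ⟨hle, heq⟩ := ih (c := fun j => c j.castSucc) (d := fun t => d t.castSucc)
      (hc.comp_strictMono (Fin.strictMono_castSucc)) (fun t => hd _) h0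
    have hlt : c (Fin.last (k + 1)) < c (Fin.last k).castSucc := hc (Fin.castSucc_lt_last _)
    have hdk := hd (Fin.last (k + 1)).castSucc
    rw [Fin.sum_univ_castSucc]
    simp only [Fin.succ_castSucc, Fin.succ_last] at hle heq ⊢
    refine ⟨by nlinarith, fun h j => ?_⟩
    have hd0 : d (Fin.last (k + 1)).castSucc = 0 := by
      by_contra hne
      have := hdk.lt_of_ne' hne
      nlinarith
    induction j using Fin.lastCases with
    | last => exact hd0
    | cast j =>
      refine heq ?_ j
      rw [hd0] at h ⊢
      linarith

/-- Let `M` be a matroid on `{0,…,n}` and `v ∈ ℝ^{n+1}`.  Let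
`∅ = S₀ ⊊ S₁ ⊊ ⋯ ⊊ S_ℓ ⊊ S_{ℓ+1} = E` be the chain of subsets such that `v` is constant
on each difference `S_{j+1}∖S_j`, with strictly decreasing values.  Then the face of the
matroid polytope `Q(M)` maximizing the dot product with `v` is the matroid polytope of the
direct sum `M|S₁/S₀ ⊕ ⋯ ⊕ M|S_{ℓ+1}/S_ℓ`, whose bases are the unions of bases of the
successive minors. -/
theorem face_of_matroid_polytope {n ℓ : ℕ} (M : Matroid (Fin (n + 1)))
    (hE : M.E = Set.univ) (v : Fin (n + 1) → ℝ)
    (Sc : Fin (ℓ + 2) → Finset (Fin (n + 1)))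
    (hmono : StrictMono Sc) (h0 : Sc 0 = ∅) (hlast : Sc (Fin.last (ℓ + 1)) = Finset.univ)
    (c : Fin (ℓ + 1) → ℝ) (hc : StrictAnti c)
    (hv : ∀ j : Fin (ℓ + 1), ∀ i ∈ Sc j.succ \ Sc j.castSucc, v i = c j) :
    faceV v (mPoly M) =
      convexHull ℝ {x | ∃ B : Fin (ℓ + 1) → Finset (Fin (n + 1)),
        (∀ j, (mMinor M ↑(Sc j.succ) ↑(Sc j.castSucc)).IsBase ↑(B j)) ∧
        x = eVec (Finset.univ.biUnion B)} := by
  classical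
  have hS := hmono.monotone
  have hground : ∀ t, (↑(Sc t) : Set (Fin (n + 1))) ⊆ M.E := fun t => by simp [hE]
  have hbase : ∀ B : Finset (Fin (n + 1)),
      (∀ t, M.IsBasis ↑(B ∩ Sc t) ↑(Sc t)) → M.IsBase ↑B := fun B hB => by
    have h := hB (Fin.last (ℓ + 1))
    rwa [hlast, Finset.inter_univ, Finset.coe_univ, ← hE, isBasis_ground_iff] at h
  choose B₀ hB₀ using fun j : Fin (ℓ + 1) =>
    (mMinor M ↑(Sc j.succ) ↑(Sc j.castSucc)).exists_isBase
  have hU := isBasis_biUnion_inter (B := fun j => (B₀ j).toFinset) hS h0 hground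
    (fun j => by simpa using hB₀ j)
  set U := Finset.univ.biUnion fun j => (B₀ j).toFinset
  have hcard : ∀ B : Finset (Fin (n + 1)), M.IsBase ↑B → ∀ t,
      (B ∩ Sc t).card ≤ (U ∩ Sc t).card := by
    intro B hB t
    have h := (hB.indep.subset (Finset.coe_subset.2 Finset.inter_subset_left)).encard_le_eRk_of_subset
      (Finset.coe_subset.2 (Finset.inter_subset_right (s₁ := B) (s₂ := Sc t)))
    rwa [← (hU t).encard_eq_eRk, Set.encard_coe_eq_coe_finsetCard,
      Set.encard_coe_eq_coe_finsetCard, Nat.cast_le] at h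
  have hdot : ∀ B : Finset (Fin (n + 1)), dotp v (eVec B) =
      ∑ j, c j * (((B ∩ Sc j.succ).card : ℝ) - (B ∩ Sc j.castSucc).card) := fun B => by
    rw [dotp_eVec, ← sum_inter_chain hS h0 hv, hlast, Finset.inter_univ]
  have hcompare : ∀ B : Finset (Fin (n + 1)), M.IsBase ↑B →
      dotp v (eVec B) ≤ dotp v (eVec U) ∧ (dotp v (eVec B) = dotp v (eVec U) →
        ∀ t, (B ∩ Sc t).card = (U ∩ Sc t).card) := by
    intro B hB
    have hd := mul_last_le_sum_mul_sub hc
      (d := fun t => ((U ∩ Sc t).card : ℝ) - (B ∩ Sc t).card)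
      (fun t => sub_nonneg.2 (Nat.cast_le.2 (hcard B hB t))) (by simp [h0])
    have hBU : B.card = U.card := by
      simpa [Set.encard_coe_eq_coe_finsetCard] using
        hB.encard_eq_encard_of_isBase (hbase U hU)
    have hsum : ∑ j, c j * ((((U ∩ Sc j.succ).card : ℝ) - (B ∩ Sc j.succ).card) -
        ((U ∩ Sc j.castSucc).card - (B ∩ Sc j.castSucc).card)) =
        dotp v (eVec U) - dotp v (eVec B) := by
      rw [hdot, hdot, ← Finset.sum_sub_distrib]
      exact Finset.sum_congr rfl fun j _ => by ring
    simp only [hsum, hlast, Finset.inter_univ, hBU, sub_self, mul_zero] at hd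
    refine ⟨sub_nonneg.1 hd.1, fun h t => ?_⟩
    induction t using Fin.lastCases with
    | last => simpa [hlast] using hBU
    | cast j => exact_mod_cast (sub_eq_zero.1 (hd.2 (by rw [h, sub_self]) j)).symm
  have hUmem : eVec U ∈ {x | ∃ B : Finset (Fin (n + 1)), M.IsBase ↑B ∧ x = eVec B} :=
    ⟨U, hbase U hU, rfl⟩
  rw [mPoly, faceV_convexHull v hUmem
    (by rintro _ ⟨B, hB, rfl⟩; exact (hcompare B hB).1)]
  congr 1
  ext x
  constructor
  · rintro ⟨⟨B, hB, rfl⟩, hx⟩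
    obtain ⟨C, hC, rfl⟩ := exists_isBase_mMinor_biUnion_eq hS h0 hground (U := B)
      (by simp [hlast]) fun t => by
        have hind : M.Indep ↑(B ∩ Sc t) := hB.indep.subset (by simp)
        refine hind.isBasis_of_eRk_ge (Finset.finite_toSet _) (by simp) ?_
        rw [hind.eRk_eq_encard, ← (hU t).encard_eq_eRk, Set.encard_coe_eq_coe_finsetCard,
          Set.encard_coe_eq_coe_finsetCard, (hcompare B hB).2 hx t]
    exact ⟨C, hC, rfl⟩
  · rintro ⟨C, hC, rfl⟩
    have hCS := isBasis_biUnion_inter hS h0 hground hC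
    refine ⟨⟨_, hbase _ hCS, rfl⟩, ?_⟩
    rw [hdot, hdot]
    have hcardC : ∀ t, (Finset.univ.biUnion C ∩ Sc t).card = (U ∩ Sc t).card := fun t => by
      have h := (hCS t).encard_eq_eRk.trans (hU t).encard_eq_eRk.symm
      rwa [Set.encard_coe_eq_coe_finsetCard, Set.encard_coe_eq_coe_finsetCard,
        Nat.cast_inj] at h
    simp only [hcardC]
end
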